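/- A quasicategory E is a Kan complex if and only if its homotopy category is a groupoid, i.e. every morphism in the homotopy category of E is an isomorphism. -/

import Mathlib

open CategoryTheory

namespace SSet

open Simplicial Opposite

universe w v u v' u'

/-- The set of vertices of a simplex of `Δ[N]`. -/
def vertexSet {N : ℕ} {d : SimplexCategory} (x : d ⟶ ⦋N⦌) : Set (Fin (N + 1)) :=
  Set.range x.toOrderHom

lemma vertexSet_comp_subset {N : ℕ} {d d' : SimplexCategory} (y : d' ⟶ d) (x : d ⟶ ⦋N⦌) :
    vertexSet (y ≫ x) ⊆ vertexSet x := by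
  rintro _ ⟨i, rfl⟩
  exact ⟨y.toOrderHom i, rfl⟩

lemma vertexSet_comp {N M : ℕ} {d : SimplexCategory} (y : d ⟶ ⦋M⦌) (x : ⦋M⦌ ⟶ ⦋N⦌) :
    vertexSet (y ≫ x) = x.toOrderHom '' vertexSet y := by
  ext j
  constructor
  · rintro ⟨i, rfl⟩
    exact ⟨_, ⟨i, rfl⟩, rfl⟩
  · rintro ⟨_, ⟨i, rfl⟩, rfl⟩
    exact ⟨i, rfl⟩

/-- A family of simplices of `E` indexed by the simplices of `Δ[N]` is compatible on `p` if it is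
natural on the simplices whose set of vertices satisfies `p`. -/
def CompatibleOn {E : SSet.{w}} {N : ℕ} (p : Set (Fin (N + 1)) → Prop)
    (φ : ∀ d : SimplexCategory, (d ⟶ ⦋N⦌) → E.obj (op d)) : Prop :=
  ∀ ⦃d d' : SimplexCategory⦄ (y : d' ⟶ d) (x : d ⟶ ⦋N⦌), p (vertexSet x) →
    E.map y.op (φ d x) = φ d' (y ≫ x)

/-- The condition on vertex sets which defines the horn `Λ[n, i]`. -/
def HornCondition {n : ℕ} (i : Fin (n + 1)) (A : Set (Fin (n + 1))) : Prop :=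
  ∃ j, j ≠ i ∧ j ∉ A

lemma mem_horn_iff_hornCondition {n : ℕ} (i : Fin (n + 1)) {d : SimplexCategory}
    (x : d ⟶ ⦋n⦌) :
    stdSimplex.objEquiv.symm x ∈ (horn.{w} n i).obj (op d) ↔
      HornCondition i (vertexSet x) := by
  simp only [mem_horn_iff, HornCondition, ne_eq, Set.eq_univ_iff_forall, not_forall, Set.mem_union,
    not_or, Set.mem_singleton_iff]
  exact ⟨fun ⟨j, h, h'⟩ ↦ ⟨j, h', h⟩, fun ⟨j, h, h'⟩ ↦ ⟨j, h', h⟩⟩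

/-- The map from a horn given by a compatible family. -/
def hornHom {E : SSet.{w}} {n : ℕ} (i : Fin (n + 1))
    (φ : ∀ d : SimplexCategory, (d ⟶ ⦋n⦌) → E.obj (op d))
    (hφ : CompatibleOn (HornCondition i) φ) : (Λ[n, i] : SSet.{w}) ⟶ E where
  app d := ↾fun x ↦ φ d.unop (stdSimplex.objEquiv x.1)
  naturality d d' f := by
    ext ⟨x, hx⟩
    obtain ⟨x, rfl⟩ := stdSimplex.objEquiv.symm.surjective x
    exact (hφ f.unop x ((mem_horn_iff_hornCondition i x).1 hx)).symm

lemma exists_filler_of_hornFilling {E : SSet.{w}} {n : ℕ} (i : Fin (n + 1))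
    (hE : ∀ σ₀ : (Λ[n, i] : SSet.{w}) ⟶ E, ∃ σ : Δ[n] ⟶ E, σ₀ = Λ[n, i].ι ≫ σ)
    (φ : ∀ d : SimplexCategory, (d ⟶ ⦋n⦌) → E.obj (op d))
    (hφ : CompatibleOn (HornCondition i) φ) :
    ∃ s : E _⦋n⦌, ∀ ⦃d : SimplexCategory⦄ (x : d ⟶ ⦋n⦌),
      HornCondition i (vertexSet x) → E.map x.op s = φ d x := by
  obtain ⟨σ, hσ⟩ := hE (hornHom i φ hφ)
  obtain ⟨s, rfl⟩ := yonedaEquiv.symm.surjective σ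
  refine ⟨s, fun d x hx ↦ ?_⟩
  have h := ConcreteCategory.congr_hom (NatTrans.congr_app hσ (op d))
    ⟨stdSimplex.objEquiv.symm x, (mem_horn_iff_hornCondition i x).2 hx⟩
  exact h.symm

lemma hornFilling_of_exists_filler {E : SSet.{w}} {n : ℕ} (hn : 0 < n) (i : Fin (n + 1))
    (hE : ∀ (φ : ∀ d : SimplexCategory, (d ⟶ ⦋n⦌) → E.obj (op d)),
      CompatibleOn (HornCondition i) φ →
      ∃ s : E _⦋n⦌, ∀ ⦃d : SimplexCategory⦄ (x : d ⟶ ⦋n⦌),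
        HornCondition i (vertexSet x) → E.map x.op s = φ d x)
    (σ₀ : (Λ[n, i] : SSet.{w}) ⟶ E) : ∃ σ : Δ[n] ⟶ E, σ₀ = Λ[n, i].ι ≫ σ := by
  classical
  have : Nontrivial (Fin (n + 1)) := Fin.nontrivial_iff_two_le.2 (by omega)
  have hne' (d : SimplexCategory) : Nonempty (E.obj (op d)) := by
    refine ⟨σ₀.app (op d) ⟨stdSimplex.objEquiv.symm (SimplexCategory.const d ⦋n⦌ i),
      (mem_horn_iff_hornCondition i _).2 ?_⟩⟩
    obtain ⟨j, hj⟩ := exists_ne i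
    exact ⟨j, hj, fun ⟨_, h⟩ ↦ hj h.symm⟩
  let φ (d : SimplexCategory) (x : d ⟶ ⦋n⦌) : E.obj (op d) :=
    if hx : HornCondition i (vertexSet x) then
      σ₀.app (op d) ⟨stdSimplex.objEquiv.symm x, (mem_horn_iff_hornCondition i x).2 hx⟩
    else (hne' d).some
  have hφ : CompatibleOn (HornCondition i) φ := by
    intro d d' y x hx
    have hyx : HornCondition i (vertexSet (y ≫ x)) := by
      obtain ⟨j, h, h'⟩ := hx
      exact ⟨j, h, fun hj ↦ h' (vertexSet_comp_subset y x hj)⟩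
    simp only [φ, dif_pos hx, dif_pos hyx]
    exact (ConcreteCategory.congr_hom (σ₀.naturality y.op)
      ⟨stdSimplex.objEquiv.symm x, (mem_horn_iff_hornCondition i x).2 hx⟩).symm
  obtain ⟨s, hs⟩ := hE φ hφ
  refine ⟨yonedaEquiv.symm s, ?_⟩
  ext d ⟨x, hx⟩
  obtain ⟨x, rfl⟩ := stdSimplex.objEquiv.symm.surjective x
  have hx' := (mem_horn_iff_hornCondition i x).1 hx
  have := hs x hx'
  simp only [φ, dif_pos hx'] at this
  exact this.symm

lemma CompatibleOn.mono {E : SSet.{w}} {N : ℕ} {p q : Set (Fin (N + 1)) → Prop}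
    {φ : ∀ d : SimplexCategory, (d ⟶ ⦋N⦌) → E.obj (op d)} (hφ : CompatibleOn p φ)
    (h : ∀ A, q A → p A) : CompatibleOn q φ :=
  fun _ _ y x hx ↦ hφ y x (h _ hx)

lemma CompatibleOn.precomp {E : SSet.{w}} {M N : ℕ} {p : Set (Fin (N + 1)) → Prop}
    {φ : ∀ d : SimplexCategory, (d ⟶ ⦋N⦌) → E.obj (op d)} (hφ : CompatibleOn p φ)
    (r : ⦋M⦌ ⟶ ⦋N⦌) :
    CompatibleOn (N := M) (fun A ↦ p (r.toOrderHom '' A)) (fun d x ↦ φ d (x ≫ r)) := by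
  intro d d' y x hx
  simp only [hφ y (x ≫ r) (by rwa [vertexSet_comp]), Category.assoc]

lemma compatibleOn_map {E : SSet.{w}} {N : ℕ} (s : E _⦋N⦌) (p : Set (Fin (N + 1)) → Prop) :
    CompatibleOn p (fun _ x ↦ E.map x.op s) := by
  intro d d' y x _
  simp

/-- Compatible families which agree on the intersection of their domains can be glued. -/
lemma CompatibleOn.glue {E : SSet.{w}} {N : ℕ} {p q : Set (Fin (N + 1)) → Prop}
    (hp : ∀ A B, A ⊆ B → p B → p A) (hq : ∀ A B, A ⊆ B → q B → q A)
    {φ ψ : ∀ d : SimplexCategory, (d ⟶ ⦋N⦌) → E.obj (op d)} (hφ : CompatibleOn p φ)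
    (hψ : CompatibleOn q ψ)
    (h : ∀ ⦃d : SimplexCategory⦄ (x : d ⟶ ⦋N⦌), p (vertexSet x) → q (vertexSet x) →
      φ d x = ψ d x) :
    ∃ χ : ∀ d : SimplexCategory, (d ⟶ ⦋N⦌) → E.obj (op d),
      CompatibleOn (fun A ↦ p A ∨ q A) χ ∧
      (∀ ⦃d : SimplexCategory⦄ (x : d ⟶ ⦋N⦌), p (vertexSet x) → χ d x = φ d x) ∧
      (∀ ⦃d : SimplexCategory⦄ (x : d ⟶ ⦋N⦌), q (vertexSet x) → χ d x = ψ d x) := by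
  classical
  let χ (d : SimplexCategory) (x : d ⟶ ⦋N⦌) : E.obj (op d) :=
    if p (vertexSet x) then φ d x else ψ d x
  have h₁ ⦃d : SimplexCategory⦄ (x : d ⟶ ⦋N⦌) (hx : p (vertexSet x)) : χ d x = φ d x := if_pos hx
  have h₂ ⦃d : SimplexCategory⦄ (x : d ⟶ ⦋N⦌) (hx : q (vertexSet x)) : χ d x = ψ d x := by
    by_cases hx' : p (vertexSet x)
    · rw [h₁ x hx', h x hx' hx]
    · exact if_neg hx'
  refine ⟨χ, ?_, h₁, h₂⟩
  rintro d d' y x (hx | hx)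
  · rw [h₁ x hx, h₁ _ (hp _ _ (vertexSet_comp_subset y x) hx), hφ y x hx]
  · rw [h₂ x hx, h₂ _ (hq _ _ (vertexSet_comp_subset y x) hx), hψ y x hx]

lemma exists_factor_of_vertexSet_subset {N d : ℕ} {ι : ⦋d⦌ ⟶ ⦋N⦌}
    (hι : Function.Injective ι.toOrderHom) {e : SimplexCategory} (x : e ⟶ ⦋N⦌)
    (hx : vertexSet x ⊆ vertexSet ι) : ∃ y : e ⟶ ⦋d⦌, y ≫ ι = x := by
  choose f hf using fun i ↦ hx ⟨i, rfl⟩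
  refine ⟨SimplexCategory.Hom.mk ⟨f, fun i j hij ↦ ?_⟩, ?_⟩
  · have h : StrictMono ι.toOrderHom := ι.toOrderHom.monotone.strictMono_of_injective hι
    rw [← h.le_iff_le, hf, hf]
    exact x.toOrderHom.monotone hij
  · ext i : 3
    exact hf i

lemma eq_of_comp_eq_comp {N d : ℕ} {ι : ⦋d⦌ ⟶ ⦋N⦌}
    (hι : Function.Injective ι.toOrderHom) {e : SimplexCategory} {y z : e ⟶ ⦋d⦌}
    (h : y ≫ ι = z ≫ ι) : y = z := by
  ext i : 3
  exact hι (congrArg (fun t ↦ t.toOrderHom i) h)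

lemma exists_injective_vertexSet_eq {N : ℕ} (A : Set (Fin (N + 1))) (hA : A.Nonempty) :
    ∃ (d : ℕ) (ι : ⦋d⦌ ⟶ ⦋N⦌), Function.Injective ι.toOrderHom ∧ vertexSet ι = A := by
  classical
  have hpos : 0 < A.toFinset.card := Finset.card_pos.2 (Set.toFinset_nonempty.2 hA)
  obtain ⟨d, hd⟩ := Nat.exists_eq_succ_of_ne_zero hpos.ne'
  let e := A.toFinset.orderEmbOfFin hd
  refine ⟨d, SimplexCategory.Hom.mk e.toOrderHom, e.injective, ?_⟩
  have := A.toFinset.range_orderEmbOfFin hd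
  rw [Set.coe_toFinset] at this
  exact this

/-- In a quasicategory, a compatible family which is defined on all the faces of a simplex
containing an inner vertex `v` of this simplex extends to this simplex. -/
lemma CompatibleOn.extend_simplex {E : SSet.{w}} [Quasicategory E] {N : ℕ}
    {p : Set (Fin (N + 1)) → Prop}
    (hp : ∀ A B, A ⊆ B → p B → p A)
    {φ : ∀ d : SimplexCategory, (d ⟶ ⦋N⦌) → E.obj (op d)} (hφ : CompatibleOn p φ)
    (S : Set (Fin (N + 1))) (v : Fin (N + 1)) (hvS : v ∉ S)
    (hlt : ∃ i ∈ S, i < v) (hgt : ∃ j ∈ S, v < j)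
    (hS : ¬ p S) (hface : ∀ i ∈ S, p (insert v S \ {i})) :
    ∃ χ : ∀ d : SimplexCategory, (d ⟶ ⦋N⦌) → E.obj (op d),
      CompatibleOn (fun A ↦ p A ∨ A ⊆ insert v S) χ ∧
      (∀ ⦃d : SimplexCategory⦄ (x : d ⟶ ⦋N⦌), p (vertexSet x) → χ d x = φ d x) := by
  obtain ⟨n, ι, hι, hιS⟩ := exists_injective_vertexSet_eq (insert v S) ⟨v, Set.mem_insert _ _⟩
  have hmono : StrictMono ι.toOrderHom := ι.toOrderHom.monotone.strictMono_of_injective hι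
  have hmem (i) (hi : i ∈ insert v S) : ∃ a, ι.toOrderHom a = i := by
    rw [← hιS] at hi
    exact hi
  obtain ⟨a, ha⟩ := hmem v (Set.mem_insert _ _)
  have ha₀ : 0 < a := by
    obtain ⟨i, hi, hiv⟩ := hlt
    obtain ⟨b, rfl⟩ := hmem i (Set.mem_insert_of_mem _ hi)
    rw [← ha, hmono.lt_iff_lt] at hiv
    exact (Fin.zero_le _).trans_lt hiv
  have han : a < Fin.last n := by
    obtain ⟨i, hi, hiv⟩ := hgt
    obtain ⟨b, rfl⟩ := hmem i (Set.mem_insert_of_mem _ hi)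
    rw [← ha, hmono.lt_iff_lt] at hiv
    exact hiv.trans_le (Fin.le_last _)
  have hcond (A : Set (Fin (n + 1))) (hA : HornCondition a A) : p (ι.toOrderHom '' A) := by
    obtain ⟨j, hja, hjA⟩ := hA
    have hj : ι.toOrderHom j ∈ insert v S := by
      rw [← hιS]
      exact ⟨j, rfl⟩
    refine hp _ _ ?_ (hface (ι.toOrderHom j) (hj.resolve_left fun h ↦ hja (hι (h.trans ha.symm))))
    rintro _ ⟨b, hb, rfl⟩
    refine ⟨?_, fun h ↦ hjA (hι h ▸ hb)⟩
    rw [← hιS]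
    exact ⟨b, rfl⟩
  obtain ⟨s, hs⟩ := exists_filler_of_hornFilling a
    (fun σ₀ ↦ Quasicategory.hornFilling ha₀ han σ₀) _ ((hφ.precomp ι).mono hcond)
  have hfactor {d : SimplexCategory} (x : d ⟶ ⦋N⦌) (hx : vertexSet x ⊆ insert v S) :
      ∃ y : d ⟶ ⦋n⦌, y ≫ ι = x :=
    exists_factor_of_vertexSet_subset hι x (hx.trans hιS.symm.subset)
  classical
  let ψ (d : SimplexCategory) (x : d ⟶ ⦋N⦌) : E.obj (op d) :=
    if hx : vertexSet x ⊆ insert v S then E.map (hfactor x hx).choose.op s else φ d x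
  have hψι ⦃d : SimplexCategory⦄ (y : d ⟶ ⦋n⦌) : ψ d (y ≫ ι) = E.map y.op s := by
    have hx : vertexSet (y ≫ ι) ⊆ insert v S :=
      (vertexSet_comp_subset y ι).trans hιS.subset
    simp only [ψ, dif_pos hx]
    rw [eq_of_comp_eq_comp hι (hfactor _ hx).choose_spec]
  obtain ⟨χ, hχ, hχφ, -⟩ := CompatibleOn.glue (q := fun A ↦ A ⊆ insert v S) hp
    (fun A B h h' ↦ h.trans h') hφ (ψ := ψ) (fun d d' y x hx ↦ by
      obtain ⟨x, rfl⟩ := hfactor x hx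
      rw [hψι, ← Category.assoc, hψι]
      simp) (fun d x hx hx' ↦ by
      obtain ⟨x, rfl⟩ := hfactor x hx'
      rw [hψι]
      refine (hs x ?_).symm
      by_contra h
      simp only [HornCondition, not_exists, not_and, not_not] at h
      refine hS (hp _ _ ?_ hx)
      intro i hi
      obtain ⟨b, rfl⟩ := hmem i (Set.mem_insert_of_mem _ hi)
      obtain ⟨c, hc⟩ := h b (fun hb ↦ hvS (by rwa [← ha, ← hb]))
      exact ⟨c, congrArg ι.toOrderHom hc⟩)
  exact ⟨χ, hχ, hχφ⟩

/-- In a quasicategory, a compatible family extends along an inclusion which is obtained by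
attaching simplices along inner horns with a given inner vertex `v`. -/
lemma CompatibleOn.extend {E : SSet.{w}} [Quasicategory E] {N : ℕ} (v : Fin (N + 1))
    {q : Set (Fin (N + 1)) → Prop} (hq : ∀ A B, A ⊆ B → q B → q A)
    {p : Set (Fin (N + 1)) → Prop} (hp : ∀ A B, A ⊆ B → p B → p A)
    (hpq : ∀ A, p A → q A)
    (hv : ∀ S, q S → ¬ p S → q (insert v S) ∧ ¬ p (S \ {v}) ∧ (∃ i ∈ S, i < v) ∧ (∃ j ∈ S, v < j))
    {φ : ∀ d : SimplexCategory, (d ⟶ ⦋N⦌) → E.obj (op d)} (hφ : CompatibleOn p φ) :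
    ∃ χ : ∀ d : SimplexCategory, (d ⟶ ⦋N⦌) → E.obj (op d), CompatibleOn q χ ∧
      (∀ ⦃d : SimplexCategory⦄ (x : d ⟶ ⦋N⦌), p (vertexSet x) → χ d x = φ d x) := by
  induction hn : {S | q S ∧ ¬ p S}.ncard using Nat.strong_induction_on generalizing p φ with
  | _ n ih =>
    by_cases hne : {S | q S ∧ ¬ p S}.Nonempty
    · obtain ⟨S, ⟨hqS, hpS⟩, hmin⟩ := Set.exists_min_image _ Set.ncard (Set.toFinite _) hne
      have hlt (A : Set (Fin (N + 1))) (hA : q A) (h : A.ncard < S.ncard) : p A := by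
        by_contra hpA
        exact absurd (hmin A ⟨hA, hpA⟩) (not_le.2 h)
      have hvS : v ∉ S := fun hvS ↦ (hv S hqS hpS).2.1
        (hlt _ (hq _ _ Set.sdiff_subset hqS) (Set.ncard_sdiff_singleton_lt_of_mem hvS))
      obtain ⟨hqv, -, hlo, hhi⟩ := hv S hqS hpS
      have hface (i) (hi : i ∈ S) : p (insert v S \ {i}) := by
        by_contra h
        refine (hv _ (hq _ _ Set.sdiff_subset hqv) h).2.1 (hp _ (S \ {i}) ?_
          (hlt _ (hq _ _ Set.sdiff_subset hqS) (Set.ncard_sdiff_singleton_lt_of_mem hi)))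
        rintro j ⟨⟨hj, hj'⟩, hj''⟩
        exact ⟨hj.resolve_left hj'', hj'⟩
      obtain ⟨χ, hχ, hχφ⟩ := hφ.extend_simplex hp S v hvS hlo hhi hpS hface
      have hle (A) (hA : p A ∨ A ⊆ insert v S) : q A := hA.elim (hpq A) (fun h ↦ hq _ _ h hqv)
      have hcard : {A | q A ∧ ¬ (p A ∨ A ⊆ insert v S)}.ncard < n := by
        rw [← hn]
        refine Set.ncard_lt_ncard ⟨fun A hA ↦ ⟨hA.1, fun h ↦ hA.2 (Or.inl h)⟩, fun h ↦ ?_⟩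
        exact (h ⟨hqS, hpS⟩ : _ ∧ _).2 (Or.inr (Set.subset_insert _ _))
      obtain ⟨χ', hχ', hχχ'⟩ := ih _ hcard (p := fun A ↦ p A ∨ A ⊆ insert v S)
        (fun A B h hB ↦ hB.imp (hp _ _ h) h.trans) hle (fun A hA hA' ↦ by
          have h := hv A hA (fun h ↦ hA' (Or.inl h))
          refine ⟨h.1, ?_, h.2.2⟩
          rintro (h' | h')
          · exact h.2.1 h'
          · refine hA' (Or.inr fun i hi ↦ ?_)
            by_cases hiv : i = v
            · exact Or.inl hiv
            · exact h' ⟨hi, hiv⟩) hχ rfl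
      exact ⟨χ', hχ', fun d x hx ↦ (hχχ' x (Or.inl hx)).trans (hχφ x hx)⟩
    · refine ⟨φ, hφ.mono fun A hA ↦ ?_, fun _ _ _ ↦ rfl⟩
      by_contra h
      exact hne ⟨A, hA, h⟩

/-- The morphism in the simplex category given by a monotone map of natural numbers. -/
def natHom (M N : ℕ) (f : ℕ → ℕ) (hf : Monotone f) (hb : ∀ i ≤ M, f i ≤ N) : ⦋M⦌ ⟶ ⦋N⦌ :=
  SimplexCategory.Hom.mk
    ⟨fun i ↦ ⟨f i.val, Nat.lt_succ_of_le (hb _ (Nat.le_of_lt_succ i.2))⟩, fun _ _ h ↦ hf h⟩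

lemma comp_δ_val {N : ℕ} (j : Fin (N + 2)) {d : SimplexCategory} (x : d ⟶ ⦋N⦌)
    (i : Fin (d.len + 1)) :
    ((x ≫ SimplexCategory.δ j).toOrderHom i).val =
      if (x.toOrderHom i).val < j.val then (x.toOrderHom i).val else (x.toOrderHom i).val + 1 := by
  change (j.succAbove (x.toOrderHom i)).val = _
  simp only [Fin.succAbove, Fin.lt_def, Fin.val_castSucc]
  split_ifs <;> rfl

lemma hom_ext_val {N : ℕ} {d : SimplexCategory} {x y : d ⟶ ⦋N⦌}
    (h : ∀ i, (x.toOrderHom i).val = (y.toOrderHom i).val) : x = y := by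
  ext i : 3
  exact Fin.ext (h i)

lemma exists_comp_δ_eq {N : ℕ} (j : Fin (N + 2)) {d : SimplexCategory} (x : d ⟶ ⦋N + 1⦌)
    (hj : ∀ i, (x.toOrderHom i).val ≠ j.val) : ∃ z : d ⟶ ⦋N⦌, z ≫ SimplexCategory.δ j = x :=
  ⟨SimplexCategory.factor_δ (m := d.len) x j,
    SimplexCategory.factor_δ_spec (m := d.len) x j fun k h ↦ hj k (congrArg Fin.val h)⟩

lemma map_comp_δ {E : SSet.{w}} {N : ℕ} (j : Fin (N + 2)) {d : SimplexCategory} (z : d ⟶ ⦋N⦌)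
    (s : E _⦋N + 1⦌) : E.map (z ≫ SimplexCategory.δ j).op s = E.map z.op (E.δ j s) := by
  simp [SimplicialObject.δ]

lemma map_comp_σ {E : SSet.{w}} {N : ℕ} (j : Fin (N + 1)) {d : SimplexCategory}
    (z : d ⟶ ⦋N + 1⦌) (s : E _⦋N⦌) :
    E.map (z ≫ SimplexCategory.σ j).op s = E.map z.op (E.σ j s) := by
  simp [SimplicialObject.σ]

lemma toOrderHom_val_le {N : ℕ} {d : SimplexCategory} (x : d ⟶ ⦋N⦌) (i : Fin (d.len + 1)) :
    (x.toOrderHom i).val ≤ N :=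
  Nat.le_of_lt_succ (x.toOrderHom i).2

/-- If every edge of `E` has a right inverse, then the edge `01` of an outer horn
`Λ[m + 2, 0]` has a right inverse, witnessed by `t₂`, which itself has a right inverse,
witnessed by `t₁`. -/
lemma exists_inverse_triangles {E : SSet.{w}}
    (hE : ∀ e : E _⦋1⦌, ∃ t : E _⦋2⦌, E.δ 0 t = e ∧ E.δ 1 t = E.σ 0 (E.δ 0 e)) {m : ℕ}
    {φ : ∀ d : SimplexCategory, (d ⟶ ⦋m + 2⦌) → E.obj (op d)}
    (hφ : CompatibleOn (HornCondition (0 : Fin (m + 3))) φ) :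
    ∃ t₁ t₂ : E _⦋2⦌,
      (∀ ⦃d : SimplexCategory⦄ (y y' : d ⟶ ⦋2⦌),
        (∀ i, (y.toOrderHom i).val = (y'.toOrderHom i).val + 1) →
          E.map y.op t₁ = E.map y'.op t₂) ∧
      (∀ ⦃d : SimplexCategory⦄ (y : d ⟶ ⦋2⦌) (x : d ⟶ ⦋m + 2⦌),
        (∀ i, (y.toOrderHom i).val ≠ 1) → (∀ i, (x.toOrderHom i).val = 0) →
          E.map y.op t₁ = φ d x) ∧
      (∀ ⦃d : SimplexCategory⦄ (y : d ⟶ ⦋2⦌) (x : d ⟶ ⦋m + 2⦌),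
        (∀ i, (y.toOrderHom i).val = (x.toOrderHom i).val + 1) →
          E.map y.op t₂ = φ d x) ∧
      (∀ ⦃d : SimplexCategory⦄ (y : d ⟶ ⦋2⦌) (x : d ⟶ ⦋m + 2⦌),
        (∀ i, (y.toOrderHom i).val ≠ 1) → (∀ i, (x.toOrderHom i).val = 1) →
          E.map y.op t₂ = φ d x) := by
  let ε : ⦋1⦌ ⟶ ⦋m + 2⦌ := natHom 1 (m + 2) id monotone_id (fun i hi ↦ by dsimp; omega)
  have hε {d : SimplexCategory} (u : d ⟶ ⦋1⦌) (x : d ⟶ ⦋m + 2⦌)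
      (h : ∀ i, (u.toOrderHom i).val = (x.toOrderHom i).val) :
      E.map u.op (φ _ ε) = φ d x := by
    obtain rfl : u ≫ ε = x := hom_ext_val h
    refine hφ u ε ⟨2, by simp [Fin.ext_iff, Nat.mod_eq_of_lt], ?_⟩
    rintro ⟨i, hi⟩
    have := toOrderHom_val_le (𝟙 ⦋1⦌) i
    have h : i.val = 2 % (m + 2 + 1) := congrArg Fin.val hi
    rw [Nat.mod_eq_of_lt (by omega)] at h
    exact absurd i.2 (by simp [h])
  obtain ⟨t₂, h₂e, h₂b⟩ := hE (φ _ ε)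
  obtain ⟨t₁, h₁f, h₁a⟩ := hE (E.δ 2 t₂)
  have H₂ ⦃d : SimplexCategory⦄ (y : d ⟶ ⦋2⦌) (x : d ⟶ ⦋m + 2⦌)
      (h : ∀ i, (y.toOrderHom i).val = (x.toOrderHom i).val + 1) :
      E.map y.op t₂ = φ d x := by
    obtain ⟨z, rfl⟩ := exists_comp_δ_eq 0 y (fun i ↦ by simp [h])
    rw [map_comp_δ, h₂e]
    refine hε z x fun i ↦ ?_
    have := h i
    rw [comp_δ_val] at this
    simpa using this
  refine ⟨t₁, t₂, fun d y y' h ↦ ?_, fun d y x hy hx ↦ ?_, H₂, fun d y x hy hx ↦ ?_⟩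
  · obtain ⟨z, rfl⟩ := exists_comp_δ_eq 0 y (fun i ↦ by simp [h])
    obtain rfl : z ≫ SimplexCategory.δ 2 = y' := hom_ext_val fun i ↦ by
      have := h i
      rw [comp_δ_val] at this ⊢
      have := toOrderHom_val_le z i
      simp at *
      split_ifs <;> omega
    rw [map_comp_δ, map_comp_δ, h₁f]
  · obtain ⟨z, rfl⟩ := exists_comp_δ_eq 1 y hy
    rw [map_comp_δ, h₁a, ← map_comp_σ, ← map_comp_δ, ← map_comp_δ]
    refine H₂ _ x fun i ↦ ?_
    have := toOrderHom_val_le (z ≫ SimplexCategory.σ 0) i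
    rw [comp_δ_val, comp_δ_val, hx]
    simp at *
  · obtain ⟨z, rfl⟩ := exists_comp_δ_eq 1 y hy
    rw [map_comp_δ, h₂b, ← map_comp_σ, ← map_comp_δ]
    refine hε _ x fun i ↦ ?_
    have := toOrderHom_val_le (z ≫ SimplexCategory.σ 0) i
    rw [comp_δ_val, hx]
    simp at *

/-- In a quasicategory where every edge has a right inverse, the outer horns `Λ[m + 2, 0]` have
fillers. -/
lemma exists_filler_zero {E : SSet.{w}} [Quasicategory E]
    (hE : ∀ e : E _⦋1⦌, ∃ t : E _⦋2⦌, E.δ 0 t = e ∧ E.δ 1 t = E.σ 0 (E.δ 0 e)) {m : ℕ}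
    (φ : ∀ d : SimplexCategory, (d ⟶ ⦋m + 2⦌) → E.obj (op d))
    (hφ : CompatibleOn (HornCondition (0 : Fin (m + 3))) φ) :
    ∃ s : E _⦋m + 2⦌, ∀ ⦃d : SimplexCategory⦄ (x : d ⟶ ⦋m + 2⦌),
      HornCondition 0 (vertexSet x) → E.map x.op s = φ d x := by
  let c : ⦋m + 4⦌ ⟶ ⦋m + 2⦌ := natHom (m + 4) (m + 2) (fun i ↦ i - 2)
    (by intro i j; simp; omega) (by simp)
  let c' : ⦋m + 4⦌ ⟶ ⦋m + 2⦌ := natHom (m + 4) (m + 2) (fun i ↦ max 1 (i - 2))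
    (by intro i j; simp; omega) (by simp)
  let κ : ⦋m + 4⦌ ⟶ ⦋m + 4⦌ := natHom (m + 4) (m + 4) (fun i ↦ if i ≤ 3 then min i 1 else i)
    (by intro i j h; beta_reduce; split_ifs <;> omega)
    (by intro i hi; split_ifs <;> omega)
  let r₁ : ⦋m + 4⦌ ⟶ ⦋2⦌ := natHom (m + 4) 2 (fun i ↦ min i 2)
    (by intro i j; simp; omega) (by simp)
  let r₂ : ⦋m + 4⦌ ⟶ ⦋2⦌ := natHom (m + 4) 2 (fun i ↦ min i 3 - 1)
    (by intro i j; simp; omega) (by simp)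
  let ι : ⦋m + 2⦌ ⟶ ⦋m + 4⦌ := natHom (m + 2) (m + 4) (fun i ↦ if i = 0 then 0 else i + 2)
    (by intro i j h; beta_reduce; split_ifs <;> omega)
    (by intro i hi; split_ifs <;> omega)
  have hr₁ ⦃d : SimplexCategory⦄ (x : d ⟶ ⦋m + 4⦌) (i : Fin (d.len + 1)) :
      ((x ≫ r₁).toOrderHom i).val = min (x.toOrderHom i).val 2 := rfl
  have hr₂ ⦃d : SimplexCategory⦄ (x : d ⟶ ⦋m + 4⦌) (i : Fin (d.len + 1)) :
      ((x ≫ r₂).toOrderHom i).val = min (x.toOrderHom i).val 3 - 1 := rfl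
  have hc_val ⦃d : SimplexCategory⦄ (x : d ⟶ ⦋m + 4⦌) (i : Fin (d.len + 1)) :
      ((x ≫ c).toOrderHom i).val = (x.toOrderHom i).val - 2 := rfl
  have hc'_val ⦃d : SimplexCategory⦄ (x : d ⟶ ⦋m + 4⦌) (i : Fin (d.len + 1)) :
      ((x ≫ c').toOrderHom i).val = max 1 ((x.toOrderHom i).val - 2) := rfl
  let Q₁ (S : Set (Fin (m + 5))) : Prop := ∀ i ∈ S, i.val ≤ 2
  let Q₂ (S : Set (Fin (m + 5))) : Prop := ∀ i ∈ S, 1 ≤ i.val ∧ i.val ≤ 3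
  let NF (S : Set (Fin (m + 5))) : Prop := ∃ i, 4 ≤ i.val ∧ i ∉ S
  let Av (k : ℕ) (S : Set (Fin (m + 5))) : Prop := ∀ i ∈ S, i.val ≠ k
  let P₂ (S : Set (Fin (m + 5))) : Prop := Av 1 S ∧ (NF S ∨ Av 3 S)
  let P₃ (S : Set (Fin (m + 5))) : Prop := Av 0 S ∧ Av 2 S ∧ NF S
  have hQ₁ (A B) (h : A ⊆ B) (hB : Q₁ B) : Q₁ A := fun i hi ↦ hB i (h hi)
  have hQ₂ (A B) (h : A ⊆ B) (hB : Q₂ B) : Q₂ A := fun i hi ↦ hB i (h hi)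
  have hAv {k A B} (h : A ⊆ B) (hB : Av k B) : Av k A := fun i hi ↦ hB i (h hi)
  have hNF {A B} (h : A ⊆ B) (hB : NF B) : NF A := hB.imp fun i hi ↦ ⟨hi.1, fun h' ↦ hi.2 (h h')⟩
  have hP₂ (A B) (h : A ⊆ B) (hB : P₂ B) : P₂ A :=
    ⟨hAv h hB.1, hB.2.imp (hNF h) (hAv h)⟩
  have hP₃ (A B) (h : A ⊆ B) (hB : P₃ B) : P₃ A :=
    ⟨hAv h hB.1, hAv h hB.2.1, hNF h hB.2.2⟩
  have hc (A) (hA : NF A ∨ Av 3 A) : HornCondition 0 (c.toOrderHom '' A) := by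
    obtain ⟨j, hj, hjA⟩ | hA := hA
    · refine ⟨⟨j.val - 2, by have := j.2; dsimp; omega⟩, by simp; omega, ?_⟩
      rintro ⟨i, hi, hij⟩
      have h : i.val - 2 = j.val - 2 := congrArg Fin.val hij
      obtain rfl : i = j := Fin.ext (by omega)
      exact hjA hi
    · refine ⟨⟨1, by simp⟩, by simp, ?_⟩
      rintro ⟨i, hi, hij⟩
      have h : i.val - 2 = 1 := congrArg Fin.val hij
      exact hA i hi (by omega)
  have hc' (A) (hA : NF A) : HornCondition 0 (c'.toOrderHom '' A) := by
    obtain ⟨j, hj, hjA⟩ := hA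
    refine ⟨⟨j.val - 2, by have := j.2; dsimp; omega⟩, by simp; omega, ?_⟩
    rintro ⟨i, hi, hij⟩
    have h : max 1 (i.val - 2) = j.val - 2 := congrArg Fin.val hij
    obtain rfl : i = j := Fin.ext (by omega)
    exact hjA hi
  obtain ⟨t₁, t₂, h₁₂, h₁, h₂, h₂'⟩ := exists_inverse_triangles hE hφ
  have ht₁ := compatibleOn_map t₁ (fun _ ↦ True)
  have ht₂ := compatibleOn_map t₂ (fun _ ↦ True)
  obtain ⟨φ₁, hφ₁, hφ₁₁, hφ₁₂⟩ := CompatibleOn.glue hQ₁ hQ₂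
    ((ht₁.precomp r₁).mono (by simp)) ((ht₂.precomp r₂).mono (by simp)) (by
      intro d x hx hx'
      refine h₁₂ _ _ fun i ↦ ?_
      have := hx _ ⟨i, rfl⟩
      have := hx' _ ⟨i, rfl⟩
      have := hr₁ x i
      have := hr₂ x i
      omega)
  obtain ⟨φ₂, hφ₂, hφ₂₁, hφ₂₂⟩ := CompatibleOn.glue (fun A B h hB ↦ hB.imp (hQ₁ A B h) (hQ₂ A B h))
    hP₂ hφ₁ ((hφ.precomp c).mono (fun A hA ↦ hc A hA.2)) (by
      rintro d x (hx | hx) hx'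
      · rw [hφ₁₁ x hx]
        refine h₁ _ _ (fun i ↦ ?_) (fun i ↦ ?_) <;>
        · have := hx _ ⟨i, rfl⟩
          have := hx'.1 _ ⟨i, rfl⟩
          have := hr₁ x i
          have := hc_val x i
          omega
      · rw [hφ₁₂ x hx]
        refine h₂ _ _ (fun i ↦ ?_)
        have := hx _ ⟨i, rfl⟩
        have := hx'.1 _ ⟨i, rfl⟩
        have := hr₂ x i
        have := hc_val x i
        omega)
  obtain ⟨φ₃, hφ₃, hφ₃₂, hφ₃₃⟩ := CompatibleOn.glue
    (fun A B h hB ↦ hB.imp (Or.imp (hQ₁ A B h) (hQ₂ A B h)) (hP₂ A B h))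
    hP₃ hφ₂ ((hφ.precomp c').mono (fun A hA ↦ hc' A hA.2.2)) (by
      rintro d x ((hx | hx) | hx) hx'
      · rw [hφ₂₁ x (Or.inl hx), hφ₁₁ x hx]
        refine (h₁₂ _ (x ≫ r₂) fun i ↦ ?_).trans (h₂' _ _ (fun i ↦ ?_) (fun i ↦ ?_)) <;>
        · have := hx _ ⟨i, rfl⟩
          have := hx'.1 _ ⟨i, rfl⟩
          have := hx'.2.1 _ ⟨i, rfl⟩
          have := hr₁ x i
          have := hr₂ x i
          have := hc'_val x i
          omega
      · rw [hφ₂₁ x (Or.inr hx), hφ₁₂ x hx]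
        refine h₂' _ _ (fun i ↦ ?_) (fun i ↦ ?_) <;>
        · have := hx _ ⟨i, rfl⟩
          have := hx'.1 _ ⟨i, rfl⟩
          have := hx'.2.1 _ ⟨i, rfl⟩
          have := hr₂ x i
          have := hc'_val x i
          omega
      · rw [hφ₂₂ x hx]
        refine congrArg (φ d) (hom_ext_val fun i ↦ ?_)
        have := hx.1 _ ⟨i, rfl⟩
        have := hx'.1 _ ⟨i, rfl⟩
        have := hx'.2.1 _ ⟨i, rfl⟩
        have := hc_val x i
        have := hc'_val x i
        omega)
  let p₀ (S : Set (Fin (m + 5))) : Prop := ((Q₁ S ∨ Q₂ S) ∨ P₂ S) ∨ P₃ S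
  have hp₀ (A B) (h : A ⊆ B) (hB : p₀ B) : p₀ A :=
    hB.imp (Or.imp (Or.imp (hQ₁ A B h) (hQ₂ A B h)) (hP₂ A B h)) (hP₃ A B h)
  have hAv_insert {k S} (v : Fin (m + 5)) (hv : v.val ≠ k) (h : Av k S) : Av k (insert v S) := by
    rintro i (rfl | hi)
    exacts [hv, h i hi]
  have hAv_diff {k S} (v : Fin (m + 5)) (hv : v.val ≠ k) (h : Av k (S \ {v})) : Av k S :=
    fun i hi hik ↦ h i ⟨hi, fun h ↦ hv (h ▸ hik)⟩ hik
  have hNF_insert {S} (v : Fin (m + 5)) (hv : v.val < 4) (h : NF S) : NF (insert v S) := by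
    obtain ⟨i, hi, hiS⟩ := h
    refine ⟨i, hi, ?_⟩
    rintro (rfl | hi')
    exacts [absurd hi (by omega), hiS hi']
  have hNF_diff {S} (v : Fin (m + 5)) (hv : v.val < 4) (h : NF (S \ {v})) : NF S := by
    obtain ⟨i, hi, hiS⟩ := h
    exact ⟨i, hi, fun hi' ↦ hiS ⟨hi', fun h ↦ absurd hi (by rw [h]; omega)⟩⟩
  obtain ⟨φ₄, hφ₄, hφ₄₃⟩ := CompatibleOn.extend (⟨3, by omega⟩ : Fin (m + 5))
    (q := fun S ↦ p₀ S ∨ (Av 0 S ∧ NF S))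
    (fun A B h hB ↦ hB.imp (hp₀ A B h) (And.imp (hAv h) (hNF h))) hp₀ (fun _ ↦ Or.inl) (by
      intro S hqS hpS
      obtain ⟨h0, hN⟩ := hqS.resolve_left hpS
      refine ⟨Or.inr ⟨hAv_insert _ (by simp) h0, hNF_insert _ (by simp) hN⟩, ?_, ?_, ?_⟩
      · rintro (((h | h) | h) | h)
        · refine hpS (Or.inl (Or.inl (Or.inr fun i hi ↦ ?_)))
          have := h0 i hi
          by_cases h3 : i.val = 3
          · omega
          · have := h i ⟨hi, fun h ↦ h3 (congrArg Fin.val h)⟩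
            omega
        · refine hpS (Or.inl (Or.inl (Or.inr fun i hi ↦ ?_)))
          by_cases h3 : i.val = 3
          · omega
          · exact h i ⟨hi, fun h ↦ h3 (congrArg Fin.val h)⟩
        · exact hpS (Or.inl (Or.inr ⟨hAv_diff _ (by simp) h.1, Or.inl hN⟩))
        · exact hpS (Or.inr ⟨h0, hAv_diff _ (by simp) h.2.1, hN⟩)
      · by_contra! h
        exact hpS (Or.inr ⟨h0, fun i hi hi' ↦ absurd (h i hi) (by simp [Fin.le_def, hi']), hN⟩)
      · by_contra! h
        refine hpS (Or.inl (Or.inl (Or.inr fun i hi ↦ ?_)))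
        have := h0 i hi
        have : i.val ≤ 3 := h i hi
        omega) hφ₃
  obtain ⟨φ₅, hφ₅, hφ₅₄⟩ := CompatibleOn.extend (⟨2, by omega⟩ : Fin (m + 5))
    (q := fun S ↦ NF S ∨ Av 3 S)
    (fun A B h hB ↦ hB.imp (hNF h) (hAv h))
    (fun A B h hB ↦ hB.imp (hp₀ A B h) (And.imp (hAv h) (hNF h)))
    (by
      rintro S ((((h | h) | h) | h) | h)
      · exact Or.inr fun i hi hi' ↦ absurd (h i hi) (by omega)
      · exact Or.inl ⟨⟨4, by omega⟩, le_rfl, fun h' ↦ absurd (h _ h') (by simp)⟩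
      · exact h.2
      · exact Or.inl h.2.2
      · exact Or.inl h.2) (by
      intro S hqS hpS
      refine ⟨hqS.imp (hNF_insert _ (by simp)) (hAv_insert _ (by simp)), ?_, ?_, ?_⟩
      · rintro ((((h | h) | h) | h) | h)
        · refine hpS (Or.inl (Or.inl (Or.inl (Or.inl fun i hi ↦ ?_))))
          by_cases h2 : i.val = 2
          · omega
          · exact h i ⟨hi, fun h ↦ h2 (congrArg Fin.val h)⟩
        · refine hpS (Or.inl (Or.inl (Or.inl (Or.inr fun i hi ↦ ?_))))
          by_cases h2 : i.val = 2
          · omega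
          · exact h i ⟨hi, fun h ↦ h2 (congrArg Fin.val h)⟩
        · exact hpS (Or.inl (Or.inl (Or.inr ⟨hAv_diff _ (by simp) h.1, hqS⟩)))
        · exact hpS (Or.inr ⟨hAv_diff _ (by simp) h.1, hNF_diff _ (by simp) h.2.2⟩)
        · exact hpS (Or.inr ⟨hAv_diff _ (by simp) h.1, hNF_diff _ (by simp) h.2⟩)
      · by_contra! h
        exact hpS (Or.inl (Or.inl (Or.inr
          ⟨fun i hi hi' ↦ absurd (h i hi) (by simp [Fin.le_def, hi']), hqS⟩)))
      · by_contra! h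
        exact hpS (Or.inl (Or.inl (Or.inl (Or.inl h))))) hφ₄
  have hφ₅₃ ⦃d : SimplexCategory⦄ (x : d ⟶ ⦋m + 4⦌) (hx : p₀ (vertexSet x)) : φ₅ d x = φ₃ d x := by
    rw [hφ₅₄ x (Or.inl hx), hφ₄₃ x hx]
  have hκ_val ⦃d : SimplexCategory⦄ (x : d ⟶ ⦋m + 4⦌) (i : Fin (d.len + 1)) :
      ((x ≫ κ).toOrderHom i).val =
        if (x.toOrderHom i).val ≤ 3 then min (x.toOrderHom i).val 1 else (x.toOrderHom i).val := rfl
  obtain ⟨φ₆, hφ₆, hφ₆₅, -⟩ := CompatibleOn.glue (q := fun S ↦ Av 0 S ∧ Av 2 S)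
    (fun A B h hB ↦ hB.imp (hNF h) (hAv h))
    (fun A B h hB ↦ hB.imp (hAv h) (hAv h)) hφ₅ ((hφ₅.precomp κ).mono (fun S hS ↦ by
      refine Or.inr ?_
      rintro _ ⟨i, hi, rfl⟩ h
      have h : (if i.val ≤ 3 then min i.val 1 else i.val) = 3 := h
      split_ifs at h <;> omega)) (by
      rintro d x (hx | hx) ⟨h0, h2⟩
      · have hP₃x : P₃ (vertexSet x) := ⟨h0, h2, hx⟩
        have hP₃κ : P₃ (vertexSet (x ≫ κ)) := by
          obtain ⟨j, hj, hjx⟩ := hx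
          refine ⟨?_, ?_, j, hj, ?_⟩
          · rintro _ ⟨i, rfl⟩
            have := hκ_val x i
            have := h0 _ ⟨i, rfl⟩
            split_ifs at * <;> omega
          · rintro _ ⟨i, rfl⟩
            have := hκ_val x i
            split_ifs at * <;> omega
          · rintro ⟨i, hi⟩
            refine hjx ⟨i, Fin.ext ?_⟩
            have := hκ_val x i
            rw [← hi] at hj ⊢
            split_ifs at * <;> omega
        rw [hφ₅₃ x (Or.inr hP₃x), hφ₅₃ _ (Or.inr hP₃κ), hφ₃₃ x hP₃x, hφ₃₃ _ hP₃κ]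
        refine congrArg (φ d) (hom_ext_val fun i ↦ ?_)
        have := h0 _ ⟨i, rfl⟩
        have := h2 _ ⟨i, rfl⟩
        have := hκ_val x i
        have := hc'_val x i
        have := hc'_val (x ≫ κ) i
        split_ifs at * <;> omega
      · refine congrArg (φ₅ d) (hom_ext_val fun i ↦ ?_)
        have := h0 _ ⟨i, rfl⟩
        have := h2 _ ⟨i, rfl⟩
        have := hx _ ⟨i, rfl⟩
        have := hκ_val x i
        split_ifs at * <;> omega)
  obtain ⟨φ₇, hφ₇, hφ₇₆⟩ := CompatibleOn.extend (⟨1, by omega⟩ : Fin (m + 5))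
    (q := fun S ↦ ((NF S ∨ Av 3 S) ∨ (Av 0 S ∧ Av 2 S)) ∨ Av 2 S)
    (fun A B h hB ↦ hB.imp (Or.imp (Or.imp (hNF h) (hAv h)) (And.imp (hAv h) (hAv h))) (hAv h))
    (fun A B h hB ↦ hB.imp (Or.imp (hNF h) (hAv h)) (And.imp (hAv h) (hAv h)))
    (fun _ ↦ Or.inl) (by
      intro S hqS hpS
      have h2 := hqS.resolve_left hpS
      refine ⟨Or.inr (hAv_insert _ (by simp) h2), ?_, ?_, ?_⟩
      · rintro ((h | h) | h)
        · exact hpS (Or.inl (Or.inl (hNF_diff _ (by simp) h)))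
        · exact hpS (Or.inl (Or.inr (hAv_diff _ (by simp) h)))
        · exact hpS (Or.inr ⟨hAv_diff _ (by simp) h.1, h2⟩)
      · by_contra! h
        exact hpS (Or.inr ⟨fun i hi hi' ↦ absurd (h i hi) (by simp [Fin.le_def, hi']), h2⟩)
      · by_contra! h
        exact hpS (Or.inl (Or.inr fun i hi hi' ↦ absurd (h i hi) (by simp [Fin.le_def, hi'])))) hφ₆
  have hι_val ⦃d : SimplexCategory⦄ (y : d ⟶ ⦋m + 2⦌) (i : Fin (d.len + 1)) :
      ((y ≫ ι).toOrderHom i).val =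
        if (y.toOrderHom i).val = 0 then 0 else (y.toOrderHom i).val + 2 := rfl
  refine ⟨φ₇ _ ι, fun d y hy ↦ ?_⟩
  have hP₂y : P₂ (vertexSet (y ≫ ι)) := by
    constructor
    · rintro _ ⟨i, rfl⟩
      have := hι_val y i
      split_ifs at * <;> omega
    · obtain ⟨j, hj0, hj⟩ := hy
      have hj0' : j.val ≠ 0 := fun h ↦ hj0 (Fin.ext h)
      have hmem (i) (h : ((y ≫ ι).toOrderHom i).val = j.val + 2) : False := by
        refine hj ⟨i, Fin.ext ?_⟩
        have := hι_val y i
        split_ifs at * <;> omega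
      by_cases hj1 : j.val = 1
      · refine Or.inr ?_
        rintro _ ⟨i, rfl⟩ hi
        exact hmem i (by omega)
      · refine Or.inl ⟨⟨j.val + 2, by omega⟩, by simp; omega, ?_⟩
        rintro ⟨i, hi⟩
        exact hmem i (congrArg Fin.val hi)
  rw [hφ₇ y ι (Or.inr ?_), hφ₇₆ _ (Or.inl hP₂y.2), hφ₆₅ _ hP₂y.2, hφ₅₃ _ (Or.inl (Or.inr hP₂y)),
    hφ₃₂ _ (Or.inr hP₂y), hφ₂₂ _ hP₂y]
  · refine congrArg (φ d) (hom_ext_val fun i ↦ ?_)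
    have := hι_val y i
    have := hc_val (y ≫ ι) i
    split_ifs at * <;> omega
  · rintro _ ⟨i, rfl⟩
    have := hι_val (𝟙 _) i
    rw [Category.id_comp] at this
    split_ifs at * <;> omega

lemma exists_filler_one {E : SSet.{w}} (i : Fin 2)
    (φ : ∀ d : SimplexCategory, (d ⟶ ⦋1⦌) → E.obj (op d))
    (hφ : CompatibleOn (HornCondition i) φ) :
    ∃ s : E _⦋1⦌, ∀ ⦃d : SimplexCategory⦄ (x : d ⟶ ⦋1⦌),
      HornCondition i (vertexSet x) → E.map x.op s = φ d x := by
  refine ⟨E.σ 0 (φ ⦋0⦌ (SimplexCategory.const ⦋0⦌ ⦋1⦌ i)), fun d x hx ↦ ?_⟩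
  obtain ⟨j, hj, hjx⟩ := hx
  rw [← map_comp_σ, hφ _ _ ⟨j, hj, fun ⟨_, h⟩ ↦ hj h.symm⟩]
  refine congrArg (φ d) (hom_ext_val fun k ↦ ?_)
  have hk : x.toOrderHom k ≠ j := fun h ↦ hjx ⟨k, h⟩
  change i.val = (x.toOrderHom k).val
  have := toOrderHom_val_le x k
  have hk' : (x.toOrderHom k).val ≠ j.val := fun h ↦ hk (Fin.ext h)
  have hj' : j.val ≠ i.val := fun h ↦ hj (Fin.ext h)
  omega

/-- Horns in a simplicial set `E'` which identifies to the opposite of `E` can be filled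
by reversing horns in `E`. -/
lemma exists_filler_of_rev {E E' : SSet.{w}}
    (θ : ∀ d : SimplexCategory, E.obj (op d) ≃ E'.obj (op d))
    (hθ : ∀ ⦃d d' : SimplexCategory⦄ (f : d' ⟶ d) (x : E.obj (op d)),
      θ d' (E.map f.op x) = E'.map (SimplexCategory.rev.map f).op (θ d x)) {n : ℕ} (i : Fin (n + 1))
    (hE : ∀ (φ : ∀ d : SimplexCategory, (d ⟶ ⦋n⦌) → E.obj (op d)),
      CompatibleOn (HornCondition i.rev) φ →
      ∃ s : E _⦋n⦌, ∀ ⦃d : SimplexCategory⦄ (x : d ⟶ ⦋n⦌),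
        HornCondition i.rev (vertexSet x) → E.map x.op s = φ d x)
    (φ : ∀ d : SimplexCategory, (d ⟶ ⦋n⦌) → E'.obj (op d))
    (hφ : CompatibleOn (HornCondition i) φ) :
    ∃ s : E' _⦋n⦌, ∀ ⦃d : SimplexCategory⦄ (x : d ⟶ ⦋n⦌),
      HornCondition i (vertexSet x) → E'.map x.op s = φ d x := by
  have hrev {i : Fin (n + 1)} {d : SimplexCategory} (x : d ⟶ ⦋n⦌)
      (hx : HornCondition i.rev (vertexSet x)) :
      HornCondition i (vertexSet (N := n) (SimplexCategory.rev.map x)) := by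
    obtain ⟨j, hj, hjx⟩ := hx
    refine ⟨j.rev, fun h ↦ hj (by simp [← h]), ?_⟩
    rintro ⟨k, hk⟩
    refine hjx ⟨k.rev, ?_⟩
    rw [SimplexCategory.rev_map_apply] at hk
    exact Fin.rev_injective hk
  obtain ⟨s, hs⟩ := hE (fun d x ↦ (θ d).symm (φ d (SimplexCategory.rev.map x))) (by
    intro d d' y x hx
    apply (θ d').injective
    rw [hθ]
    simp only [Equiv.apply_symm_apply, Functor.map_comp]
    exact hφ (SimplexCategory.rev.map y) _ (hrev x hx))
  refine ⟨θ _ s, fun d x hx ↦ ?_⟩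
  have h := congrArg (θ d) (hs (SimplexCategory.rev.map x)
    (hrev (i := i.rev) x (by rwa [Fin.rev_rev])))
  rw [hθ] at h
  simpa using h

instance quasicategory_op (E : SSet.{w}) [Quasicategory E] : Quasicategory E.op where
  hornFilling' n i σ₀ h₀ hn := by
    refine hornFilling_of_exists_filler (by omega) i (exists_filler_of_rev
      (fun d ↦ (opObjEquiv (X := E) (n := op d)).symm) (fun d d' f x ↦ ?_) i
      (exists_filler_of_hornFilling _ (Quasicategory.hornFilling ?_ ?_))) σ₀
    · simp [op_map]
    · exact Fin.rev_last (n + 2) ▸ Fin.rev_lt_rev.2 hn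
    · exact Fin.rev_zero (n + 2) ▸ Fin.rev_lt_rev.2 h₀

lemma kanComplex_of_exists_filler {E : SSet.{w}}
    (hE : ∀ (n : ℕ) (i : Fin (n + 2)) (φ : ∀ d : SimplexCategory, (d ⟶ ⦋n + 1⦌) → E.obj (op d)),
      CompatibleOn (HornCondition i) φ →
      ∃ s : E _⦋n + 1⦌, ∀ ⦃d : SimplexCategory⦄ (x : d ⟶ ⦋n + 1⦌),
        HornCondition i (vertexSet x) → E.map x.op s = φ d x) : KanComplex E := by
  rw [KanComplex.iff]
  intro n i f hf
  obtain ⟨g, hg⟩ := hf.exists_desc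
  obtain ⟨σ, rfl⟩ := hornFilling_of_exists_filler (by omega) i (hE n i) g
  exact ⟨σ, fun j hj ↦ by rw [← hg j hj, horn.ι_ι_assoc]⟩

/-- A quasicategory in which all edges have right and left inverses is a Kan complex. -/
lemma kanComplex_of_inverses {E : SSet.{w}} [Quasicategory E]
    (hr : ∀ e : E _⦋1⦌, ∃ t : E _⦋2⦌, E.δ 0 t = e ∧ E.δ 1 t = E.σ 0 (E.δ 0 e))
    (hl : ∀ e : E _⦋1⦌, ∃ t : E _⦋2⦌, E.δ 2 t = e ∧ E.δ 1 t = E.σ 0 (E.δ 1 e)) :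
    KanComplex E := by
  refine kanComplex_of_exists_filler fun n i ↦ ?_
  obtain _ | n := n
  · exact exists_filler_one i
  by_cases h₀ : i = 0
  · subst h₀
    exact exists_filler_zero hr
  by_cases hn : i = Fin.last _
  · subst hn
    refine exists_filler_of_rev (fun d ↦ (opObjEquiv (X := E) (n := op d))) (fun d d' f x ↦ ?_) _ ?_
    · simp [op_map]
    · rw [Fin.rev_last]
      refine exists_filler_zero fun e ↦ ?_
      obtain ⟨t, ht, ht'⟩ := hl (opObjEquiv e)
      refine ⟨opObjEquiv.symm t, ?_, ?_⟩
      · rw [op_δ]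
        exact congrArg opObjEquiv.symm ht
      · rw [op_δ, op_δ, op_σ]
        exact congrArg opObjEquiv.symm ht'
  · exact exists_filler_of_hornFilling _
      (Quasicategory.hornFilling (Fin.pos_iff_ne_zero.2 h₀) (Fin.lt_last_iff_ne_last.2 hn))

section

variable {E : SSet.{w}}

lemma δ_eq_of_comp_horn_ι {n : ℕ} {i j : Fin (n + 2)} (hij : j ≠ i) {σ : Δ[n + 1] ⟶ E} {s : E _⦋n⦌}
    (h : horn.ι i j hij ≫ Λ[n + 1, i].ι ≫ σ = yonedaEquiv.symm s) :
    E.δ j (yonedaEquiv σ) = s := by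
  rw [← stdSimplex.yonedaEquiv_δ_comp, ← horn.ι_ι_assoc (hij := hij), h, Equiv.apply_symm_apply]

lemma Quasicategory.exists_δ_two [Quasicategory E] {s₀ s₂ : E _⦋1⦌} (h : E.δ 0 s₂ = E.δ 1 s₀) :
    ∃ t : E _⦋2⦌, E.δ 0 t = s₀ ∧ E.δ 2 t = s₂ := by
  obtain ⟨φ, hφ, hφ'⟩ := horn₂₁.isPushout.exists_desc (yonedaEquiv.symm s₂) (yonedaEquiv.symm s₀)
    (by simp only [stdSimplex.δ_comp_yonedaEquiv_symm, h])
  obtain ⟨σ, rfl⟩ := Quasicategory.hornFilling (by simp) (by simp) φ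
  exact ⟨yonedaEquiv σ, δ_eq_of_comp_horn_ι (by simp) hφ', δ_eq_of_comp_horn_ι (by simp) hφ⟩

lemma Quasicategory.exists_δ_three_one [Quasicategory E] {t₀ t₂ t₃ : E _⦋2⦌}
    (h₁₂ : E.δ 2 t₀ = E.δ 0 t₃) (h₁₃ : E.δ 1 t₀ = E.δ 0 t₂) (h₂₃ : E.δ 2 t₂ = E.δ 2 t₃) :
    ∃ t : E _⦋2⦌, E.δ 0 t = E.δ 0 t₀ ∧ E.δ 1 t = E.δ 1 t₂ ∧ E.δ 2 t = E.δ 1 t₃ := by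
  obtain ⟨φ, hφ₀, hφ₂, hφ₃⟩ := horn₃₁.exists_desc (yonedaEquiv.symm t₀) (yonedaEquiv.symm t₂)
    (yonedaEquiv.symm t₃) (by simp only [stdSimplex.δ_comp_yonedaEquiv_symm, h₁₂])
    (by simp only [stdSimplex.δ_comp_yonedaEquiv_symm, h₁₃])
    (by simp only [stdSimplex.δ_comp_yonedaEquiv_symm, h₂₃])
  obtain ⟨σ, rfl⟩ := Quasicategory.hornFilling (by simp) (by simp [Fin.lt_def]) φ
  rw [← δ_eq_of_comp_horn_ι (by simp) hφ₀, ← δ_eq_of_comp_horn_ι (by simp) hφ₂,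
    ← δ_eq_of_comp_horn_ι (by simp) hφ₃]
  exact ⟨E.δ 1 (yonedaEquiv σ), E.δ_comp_δ_apply (i := 0) (j := 0) le_rfl _,
    (E.δ_comp_δ_apply (i := 1) (j := 1) le_rfl _).symm,
    (E.δ_comp_δ_apply (i := 1) (j := 2) (by decide) _).symm⟩

lemma Quasicategory.exists_δ_three_two [Quasicategory E] {t₀ t₁ t₃ : E _⦋2⦌}
    (h₀₂ : E.δ 2 t₁ = E.δ 1 t₃) (h₁₂ : E.δ 2 t₀ = E.δ 0 t₃) (h₂₃ : E.δ 0 t₀ = E.δ 0 t₁) :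
    ∃ t : E _⦋2⦌, E.δ 0 t = E.δ 1 t₀ ∧ E.δ 1 t = E.δ 1 t₁ ∧ E.δ 2 t = E.δ 2 t₃ := by
  obtain ⟨φ, hφ₀, hφ₁, hφ₃⟩ := horn₃₂.exists_desc (yonedaEquiv.symm t₀) (yonedaEquiv.symm t₁)
    (yonedaEquiv.symm t₃) (by simp only [stdSimplex.δ_comp_yonedaEquiv_symm, h₀₂])
    (by simp only [stdSimplex.δ_comp_yonedaEquiv_symm, h₁₂])
    (by simp only [stdSimplex.δ_comp_yonedaEquiv_symm, h₂₃])
  obtain ⟨σ, rfl⟩ := Quasicategory.hornFilling (by simp) (by simp [Fin.lt_def]) φ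
  rw [← δ_eq_of_comp_horn_ι (by simp) hφ₀, ← δ_eq_of_comp_horn_ι (by simp) hφ₁,
    ← δ_eq_of_comp_horn_ι (by simp) hφ₃]
  exact ⟨E.δ 2 (yonedaEquiv σ), E.δ_comp_δ_apply (i := 0) (j := 1) (by decide) _,
    E.δ_comp_δ_apply (i := 1) (j := 1) le_rfl _,
    (E.δ_comp_δ_apply (i := 2) (j := 2) le_rfl _).symm⟩

instance [Quasicategory E] : Truncated.Quasicategory₂ ((truncation 2).obj E) where
  fill21 e₀₁ e₁₂ := by
    obtain ⟨t, h₀, h₂⟩ := Quasicategory.exists_δ_two (E := E) (s₀ := e₁₂.edge) (s₂ := e₀₁.edge)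
      (e₀₁.tgt_eq.trans e₁₂.src_eq.symm)
    refine ⟨⟨E.δ 1 t, ?_, ?_⟩, ⟨t, h₂, h₀, rfl⟩⟩
    · refine (E.δ_comp_δ_apply (i := 1) (j := 1) le_rfl t).symm.trans ?_
      exact (congrArg (E.δ 1) h₂).trans e₀₁.src_eq
    · refine (E.δ_comp_δ_apply (i := 0) (j := 0) le_rfl t).trans ?_
      exact (congrArg (E.δ 0) h₀).trans e₁₂.tgt_eq
  fill31 f₃ f₀ f₂ := by
    obtain ⟨t, h₀, h₁, h₂⟩ := Quasicategory.exists_δ_three_one (E := E)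
      (f₀.d₂.trans f₃.d₀.symm) (f₀.d₁.trans f₂.d₀.symm) (f₂.d₂.trans f₃.d₂.symm)
    exact ⟨⟨t, h₂.trans f₃.d₁, h₀.trans f₀.d₀, h₁.trans f₂.d₁⟩⟩
  fill32 f₃ f₀ f₁ := by
    obtain ⟨t, h₀, h₁, h₂⟩ := Quasicategory.exists_δ_three_two (E := E)
      (f₁.d₂.trans f₃.d₁.symm) (f₀.d₂.trans f₃.d₀.symm) (f₀.d₀.trans f₁.d₀.symm)
    exact ⟨⟨t, h₂.trans f₃.d₂, h₀.trans f₀.d₁, h₁.trans f₁.d₁⟩⟩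

/-- Edges in a Kan complex have inverses up to homotopy. -/
lemma KanComplex.exists_right_inverse [KanComplex E] (e : E _⦋1⦌) :
    ∃ t : E _⦋2⦌, E.δ 2 t = e ∧ E.δ 1 t = E.σ 0 (E.δ 1 e) := by
  obtain ⟨φ, hφ, hφ'⟩ := horn₂₀.isPushout.exists_desc (yonedaEquiv.symm e)
    (yonedaEquiv.symm (E.σ 0 (E.δ 1 e)))
    (by simp only [stdSimplex.δ_comp_yonedaEquiv_symm]
        exact congrArg _ (E.δ_comp_σ_succ_apply (i := (0 : Fin 1)) _).symm)
  obtain ⟨σ, rfl⟩ := KanComplex.hornFilling φ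
  exact ⟨yonedaEquiv σ, δ_eq_of_comp_horn_ι (by simp) hφ, δ_eq_of_comp_horn_ι (by simp) hφ'⟩

lemma KanComplex.exists_left_inverse [KanComplex E] (e : E _⦋1⦌) :
    ∃ t : E _⦋2⦌, E.δ 0 t = e ∧ E.δ 1 t = E.σ 0 (E.δ 0 e) := by
  obtain ⟨φ, hφ, hφ'⟩ := horn₂₂.isPushout.exists_desc
    (yonedaEquiv.symm (E.σ 0 (E.δ 0 e))) (yonedaEquiv.symm e)
    (by simp only [stdSimplex.δ_comp_yonedaEquiv_symm]
        exact congrArg _ (E.δ_comp_σ_self_apply (i := (0 : Fin 1)) _))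
  obtain ⟨σ, rfl⟩ := KanComplex.hornFilling φ
  exact ⟨yonedaEquiv σ, δ_eq_of_comp_horn_ι (by simp) hφ', δ_eq_of_comp_horn_ι (by simp) hφ⟩

end

section

variable {C : Type u} [Category.{v} C]

lemma isSplitEpi_of_isIso_comp {X Y Z : C} {f : X ⟶ Y} {g : Y ⟶ Z} (h : IsIso (f ≫ g)) :
    IsSplitEpi g :=
  ⟨⟨inv (f ≫ g) ≫ f, by simp⟩⟩

lemma isIso_map'_of_σ {s : ComposableArrows C 1} {x : ComposableArrows C 0}
    (h : s = (nerve C).σ 0 x) : IsIso (s.map' 0 1) := by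
  subst h
  change IsIso (x.map' 0 0)
  rw [ComposableArrows.map'_self x 0]
  infer_instance

/-- An edge in the nerve of a category which admits left and right inverses
up to homotopy is an isomorphism. -/
lemma isIso_map'_of_inverses {s : ComposableArrows C 1} {t t' : ComposableArrows C 2}
    {x x' : ComposableArrows C 0}
    (h : (nerve C).δ 2 t = s) (hx : (nerve C).δ 1 t = (nerve C).σ 0 x)
    (h' : (nerve C).δ 0 t' = s) (hx' : (nerve C).δ 1 t' = (nerve C).σ 0 x') :
    IsIso (s.map' 0 1) := by
  have hm {r : ComposableArrows C 2} {y : ComposableArrows C 0}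
      (hr : (nerve C).δ 1 r = (nerve C).σ 0 y) :
      IsIso (r.map' 0 1 ≫ r.map' 1 2) := by
    rw [← ComposableArrows.map'_comp r 0 1 2]
    exact isIso_map'_of_σ hr
  have h₁ : Mono (s.map' 0 1) := by
    subst h
    have := hm hx
    exact mono_of_mono (t.map' 0 1) (t.map' 1 2)
  have h₂ : IsSplitEpi (s.map' 0 1) := by
    subst h'
    exact isSplitEpi_of_isIso_comp (hm hx')
  exact isIso_of_mono_of_isSplitEpi _

/-- The lift to the core of a functor sending all morphisms to isomorphisms. -/
def liftIsomorphisms {J : Type*} [Category* J] (F : J ⥤ C)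
    (hF : ∀ ⦃i j : J⦄ (f : i ⟶ j), IsIso (F.map f)) :
    J ⥤ WideSubcategory (MorphismProperty.isomorphisms C) where
  obj j := ⟨F.obj j⟩
  map f := ⟨F.map f, hF f⟩
  map_id j := by ext; exact F.map_id j
  map_comp f g := by ext; exact F.map_comp f g

lemma liftIsomorphisms_congr {J : Type*} [Category* J] {F G : J ⥤ C} (h : F = G)
    (hF : ∀ ⦃i j : J⦄ (f : i ⟶ j), IsIso (F.map f))
    (hG : ∀ ⦃i j : J⦄ (f : i ⟶ j), IsIso (G.map f)) :
    liftIsomorphisms F hF = liftIsomorphisms G hG := by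
  subst h
  rfl

end

lemma isIso_map_of_edges {C : Type u} [Category.{v} C] {E : SSet.{max u v}} (η : E ⟶ nerve C)
    (h : ∀ e : E _⦋1⦌, IsIso (ComposableArrows.map' (η.app _ e) 0 1))
    {n : SimplexCategoryᵒᵖ} (x : E.obj n) ⦃i j : Fin (n.unop.len + 1)⦄ (f : i ⟶ j) :
    IsIso (CategoryTheory.Functor.map (η.app n x : ComposableArrows C n.unop.len) f) := by
  have h' := h (E.map (SimplexCategory.mkOfLe (n := n.unop.len) i j (leOfHom f)).op x)
  have := η.naturality_apply (SimplexCategory.mkOfLe (n := n.unop.len) i j (leOfHom f)).op x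
  have key (s : ComposableArrows C 1) (hs : s = (nerve C).map
    (SimplexCategory.mkOfLe (n := n.unop.len) i j (leOfHom f)).op (η.app n x))
    (h' : IsIso (s.map' 0 1)) :
      IsIso (CategoryTheory.Functor.map (η.app n x : ComposableArrows C n.unop.len) f) := by
    subst hs
    exact h'
  exact key _ this h'

/-- A map to the nerve of a category sending edges to isomorphisms factors through the core. -/
def liftNerveIsomorphisms {C : Type u} [Category.{v} C] {E : SSet.{max u v}} (η : E ⟶ nerve C)
    (h : ∀ e : E _⦋1⦌, IsIso (ComposableArrows.map' (η.app _ e) 0 1)) :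
    E ⟶ nerve (WideSubcategory (MorphismProperty.isomorphisms C)) where
  app n := ↾fun x ↦ liftIsomorphisms (η.app n x) (isIso_map_of_edges η h x)
  naturality n m f := by
    ext x
    exact liftIsomorphisms_congr (η.naturality_apply f x) _ _

lemma isIso_of_edges {ho : SSet.{max u v} ⥤ Cat.{v, u}} (adj : ho ⊣ nerveFunctor.{v, u})
    {E : SSet.{max u v}}
    (h : ∀ e : E _⦋1⦌, IsIso (ComposableArrows.map' ((adj.unit.app E).app _ e) 0 1))
    {x y : ho.obj E} (f : x ⟶ y) : IsIso f := by
  let ι : Cat.of (WideSubcategory (MorphismProperty.isomorphisms (ho.obj E))) ⟶ ho.obj E :=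
    (wideSubcategoryInclusion _).toCatHom
  let β : E ⟶ nerveFunctor.obj (Cat.of (WideSubcategory
    (MorphismProperty.isomorphisms (ho.obj E)))) := liftNerveIsomorphisms (adj.unit.app E) h
  obtain ⟨G, hG⟩ := (adj.homEquiv _ _).surjective β
  have hG' : G ≫ ι = 𝟙 _ := by
    apply (adj.homEquiv _ _).injective
    rw [Adjunction.homEquiv_naturality_right, hG, Adjunction.homEquiv_id]
    rfl
  have hι {a b : WideSubcategory (MorphismProperty.isomorphisms (ho.obj E))} (g : a ⟶ b) :
      IsIso ((wideSubcategoryInclusion _).map g) := g.property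
  have := Functor.congr_hom (congrArg Cat.Hom.toFunctor hG') f
  change (wideSubcategoryInclusion _).map (G.toFunctor.map f) = _ ≫ f ≫ _ at this
  have hf := hι (G.toFunctor.map f)
  rwa [this, isIso_comp_left_iff, isIso_comp_right_iff] at hf

/-- The homotopy category of a Kan complex is a groupoid. -/
lemma isIso_of_kanComplex {ho : SSet.{max u v} ⥤ Cat.{v, u}} (adj : ho ⊣ nerveFunctor.{v, u})
    {E : SSet.{max u v}} [KanComplex E] {x y : ho.obj E} (f : x ⟶ y) :
    IsIso f := by
  refine isIso_of_edges adj (fun e ↦ ?_) f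
  obtain ⟨t, ht, ht'⟩ := KanComplex.exists_right_inverse e
  obtain ⟨s, hs, hs'⟩ := KanComplex.exists_left_inverse e
  let η : E ⟶ nerve (ho.obj E) := adj.unit.app E
  have hδ (i : Fin 3) (t : E _⦋2⦌) : (nerve _).δ i (η.app _ t) = η.app _ (E.δ i t) :=
    (η.naturality_apply _ _).symm
  have hσ (x : E _⦋0⦌) : η.app _ (E.σ 0 x) = (nerve _).σ 0 (η.app _ x) :=
    η.naturality_apply _ _
  exact isIso_map'_of_inverses (t := η.app _ t) (t' := η.app _ s)
    ((hδ _ _).trans (congrArg _ ht)) ((hδ _ _).trans ((congrArg _ ht').trans (hσ _)))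
    ((hδ _ _).trans (congrArg _ hs)) ((hδ _ _).trans ((congrArg _ hs').trans (hσ _)))

/-- A map to a nerve factors through the unit of an adjunction `ho ⊣ nerveFunctor`. -/
lemma exists_functor_of_nerve_adjunction
    {ho : SSet.{max u v} ⥤ Cat.{v, u}} (adj : ho ⊣ nerveFunctor.{v, u})
    {C : Type u} [Category.{v} C]
    {X : SSet.{max u v}} (φ : X ⟶ nerve C) :
    ∃ F : ho.obj X ⥤ C, ∀ (n : ℕ) (x : X _⦋n⦌),
      φ.app _ x = ((adj.unit.app X).app _ x : ComposableArrows (ho.obj X) n) ⋙ F := by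
  obtain ⟨F, rfl⟩ := (adj.homEquiv X (Cat.of C)).surjective φ
  exact ⟨F.toFunctor, fun n x ↦ by rw [adj.homEquiv_unit]; rfl⟩

/-- The map to `nerve D` obtained by composing a functor `C ⥤ D` with the chains in `C` which
correspond naturally to the simplices of `X`: the universes of `C` and `D` may differ. -/
def toNerveComp {C : Type u'} [Category.{v'} C] {D : Type u} [Category.{v} D]
    {X : SSet.{max u v}} (φ : ∀ n, X.obj n → ComposableArrows C n.unop.len)
    (hφ : ∀ {n m : SimplexCategoryᵒᵖ} (f : n ⟶ m) (x : X.obj n),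
      φ m (X.map f x) = (nerve C).map f (φ n x))
    (K : C ⥤ D) : X ⟶ nerve D where
  app n := ↾fun x ↦ φ n x ⋙ K
  naturality n m f := by
    ext x
    exact congrArg (fun y : ComposableArrows C m.unop.len ↦ y ⋙ K) (hφ f x)

/-- An adjunction `ho ⊣ nerveFunctor` forces the types of objects to be large enough. -/
lemma small_obj_of_nerve_adjunction {ho : SSet.{max u v} ⥤ Cat.{v, u}}
    (adj : ho ⊣ nerveFunctor.{v, u}) (S : Type (max u v)) : Small.{u} S := by
  classical
  let X : SSet.{max u v} := (CategoryTheory.Functor.const SimplexCategoryᵒᵖ).obj S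
  let : Category.{0} (ULift.{u} (Discrete Bool)) := uliftCategory _
  let C := ULiftHom.{v} (ULift.{u} (Discrete Bool))
  let c (b : Bool) : C := ULiftHom.objUp (ULift.up (Discrete.mk b))
  have hc : Function.Injective c := fun a b h ↦
    congrArg (fun z : C ↦ (ULiftHom.objDown z).down.as) h
  let φ (f : S → Bool) : X ⟶ nerve C :=
    { app n := ↾fun s ↦ (CategoryTheory.Functor.const _).obj (c (f s))
      naturality n m g := by ext s; rfl }
  let γ (s : S) : ho.obj X := nerveEquiv ((adj.unit.app X).app (op ⦋0⦌) s)
  refine small_of_injective (f := γ) fun s s' hs ↦ ?_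
  obtain ⟨F, hF⟩ := exists_functor_of_nerve_adjunction adj (φ fun t ↦ decide (t = s))
  have h (t : S) : F.obj (γ t) = c (decide (t = s)) :=
    (congrArg nerveEquiv (hF 0 t)).symm
  have := hc ((h s).symm.trans ((congrArg F.obj hs).trans (h s')))
  simpa [eq_comm] using this

/-- An adjunction `ho ⊣ nerveFunctor` forces the types of morphisms to be large enough. -/
lemma small_hom_of_nerve_adjunction {ho : SSet.{max u v} ⥤ Cat.{v, u}}
    (adj : ho ⊣ nerveFunctor.{v, u}) (S : Type (max u v)) : Small.{v} S := by
  classical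
  let P := SingleObj (FreeMonoid S)
  let X : SSet.{max u v} := nerve P
  let : Category.{0} (ULift.{u} (SingleObj (Multiplicative ℕ))) := uliftCategory _
  let C := ULiftHom.{v} (ULift.{u} (SingleObj (Multiplicative ℕ)))
  let K (f : S → Multiplicative ℕ) : P ⥤ C :=
    SingleObj.mapHom _ _ (FreeMonoid.lift f) ⋙ ULift.upFunctor ⋙ ULiftHom.up
  let φ (f : S → Multiplicative ℕ) : X ⟶ nerve C :=
    toNerveComp (fun n x ↦ x) (fun _ _ ↦ rfl) (K f)
  let p : P := SingleObj.star _
  let e (s : S) : (nerve P).Edge (nerveEquiv.symm p) (nerveEquiv.symm p) :=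
    nerve.edgeMk (show p ⟶ p from FreeMonoid.of s)
  let γ (s : S) := nerve.homEquiv ((e s).map (adj.unit.app X))
  refine small_of_injective (f := γ) fun s s' hs ↦ ?_
  obtain ⟨F, hF⟩ := exists_functor_of_nerve_adjunction adj
    (φ fun t ↦ if t = s then .ofAdd 1 else 1)
  have h₁ : (adj.unit.app X).app _ (e s).edge = (adj.unit.app X).app _ (e s').edge :=
    congrArg Edge.edge (nerve.homEquiv.injective hs)
  have h₂ := (hF 1 (e s).edge).trans
    ((congrArg (fun x : ComposableArrows _ 1 ↦ x ⋙ F) h₁).trans (hF 1 (e s').edge).symm)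
  let ev (x : ComposableArrows C 1) : Multiplicative ℕ := ULift.down (x.map' 0 1)
  have hev (f : S → Multiplicative ℕ) (t : S) : ev ((φ f).app _ (e t).edge) = f t :=
    FreeMonoid.lift_eval_of f t
  have h₃ := (hev _ _).symm.trans ((congrArg ev h₂).trans (hev _ _))
  by_contra h
  have : ¬ s' = s := fun h' ↦ h h'.symm
  rw [if_pos rfl, if_neg this] at h₃
  exact absurd h₃ (by decide)

/-- A map from the truncation of `E` to the truncation of the nerve of a category lifts to `E`. -/
lemma exists_hom_of_truncation {E : SSet.{w}} {C : Type w} [SmallCategory C]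
    (χ : (truncation 2).obj E ⟶ (truncation 2).obj (nerve C)) :
    ∃ ψ : E ⟶ nerve C, (truncation 2).map ψ = χ := by
  have : IsIso ((coskAdj 2).unit.app (nerve C)) :=
    (SimplicialObject.isCoskeletal_iff_isIso (nerve C) 2).mp inferInstance
  refine ⟨(coskAdj 2).homEquiv E _ χ ≫ inv ((coskAdj 2).unit.app (nerve C)), ?_⟩
  apply ((coskAdj 2).homEquiv E _).injective
  rw [← Category.comp_id ((truncation 2).map _), Adjunction.homEquiv_naturality_left,
    Adjunction.homEquiv_id, Category.assoc, IsIso.inv_hom_id, Category.comp_id]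

open Truncated

/-- The canonical functor to the category of homotopy classes of edges. -/
noncomputable def toHomotopyCategory₂ (X : Truncated.{w} 2) [Quasicategory₂ X] :
    X.HomotopyCategory ⥤ X.HomotopyCategory₂ :=
  HomotopyCategory.lift HomotopyCategory₂.mk (fun e ↦ HomotopyCategory₂.homMk e)
    (fun x ↦ HomotopyCategory₂.homMk_id ⟨x⟩) (fun h ↦ h.homotopyCategory₂_fac)

lemma exists_hom_nerve_homotopyCategory₂ (E : SSet.{w}) [Quasicategory E] :
    ∃ ψ : E ⟶ nerve ((truncation 2).obj E).HomotopyCategory₂, ∀ e : E _⦋1⦌,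
      ψ.app _ e = ComposableArrows.mk₁ (HomotopyCategory₂.homMk
        (Truncated.Edge.mk' (X := (truncation 2).obj E) e)) := by
  obtain ⟨ψ, hψ⟩ := exists_hom_of_truncation
    (HomotopyCategory.homToNerveMk (toHomotopyCategory₂ ((truncation 2).obj E)))
  refine ⟨ψ, fun e ↦ ?_⟩
  have := congrArg (fun φ ↦ (φ.app (op ⟨⦋1⦌, by simp⟩)).hom e) hψ
  refine this.trans ?_
  refine (HomotopyCategory.homToNerveMk_app_one _ _).trans ?_
  exact congrArg _ (HomotopyCategory.lift_map_homMk _ _ _ _ _)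

lemma isIso_homMk_of_isIso {ho : SSet.{max u v} ⥤ Cat.{v, u}} (adj : ho ⊣ nerveFunctor.{v, u})
    (E : SSet.{max u v}) [Quasicategory E] (h : ∀ (x y : ho.obj E) (f : x ⟶ y), IsIso f)
    (e : E _⦋1⦌) :
    IsIso (HomotopyCategory₂.homMk (Truncated.Edge.mk' (X := (truncation 2).obj E) e)) := by
  have : LocallySmall.{v} ((truncation 2).obj E).HomotopyCategory₂ :=
    ⟨fun _ _ ↦ small_hom_of_nerve_adjunction adj _⟩
  have : Small.{u} (ShrinkHoms ((truncation 2).obj E).HomotopyCategory₂) :=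
    small_obj_of_nerve_adjunction adj (ShrinkHoms ((truncation 2).obj E).HomotopyCategory₂)
  let K := (ShrinkHoms.equivalence ((truncation 2).obj E).HomotopyCategory₂).trans
    (Shrink.equivalence.{u} (ShrinkHoms ((truncation 2).obj E).HomotopyCategory₂))
  obtain ⟨ψ, hψ⟩ := exists_hom_nerve_homotopyCategory₂ E
  obtain ⟨F, hF⟩ := exists_functor_of_nerve_adjunction adj (X := E)
    (toNerveComp (fun n x ↦ ψ.app n x) (fun f x ↦ ψ.naturality_apply f x) K.functor)
  have hF' : (ComposableArrows.mk₁ (HomotopyCategory₂.homMk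
      (Truncated.Edge.mk' (X := (truncation 2).obj E) e)) : ComposableArrows _ 1) ⋙ K.functor = _ :=
    (congrArg (fun x : ComposableArrows _ 1 ↦ x ⋙ K.functor) (hψ e)).symm.trans (hF 1 e)
  have key {C : Type u} [Category.{v} C] {s t : ComposableArrows C 1} (hst : s = t)
      (ht : IsIso (t.map' 0 1)) :
      IsIso (s.map' 0 1) := by
    subst hst
    exact ht
  have := h _ _ (ComposableArrows.map' ((adj.unit.app E).app _ e) 0 1)
  have : IsIso (K.functor.map (HomotopyCategory₂.homMk
      (Truncated.Edge.mk' (X := (truncation 2).obj E) e))) := key hF' (inferInstanceAs (IsIso (F.map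
    (ComposableArrows.map' ((adj.unit.app E).app _ e) 0 1))))
  exact isIso_of_reflects_iso _ K.functor

/-- A quasicategory whose homotopy category is a groupoid is a Kan complex. -/
lemma kanComplex_of_isIso {ho : SSet.{max u v} ⥤ Cat.{v, u}} (adj : ho ⊣ nerveFunctor.{v, u})
    (E : SSet.{max u v}) [Quasicategory E] (h : ∀ (x y : ho.obj E) (f : x ⟶ y), IsIso f) :
    KanComplex E := by
  refine kanComplex_of_inverses (fun e ↦ ?_) (fun e ↦ ?_)
  all_goals
    have := isIso_homMk_of_isIso adj E h e
    obtain ⟨f, hf⟩ := HomotopyCategory₂.homMk_surjective (inv (HomotopyCategory₂.homMk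
      (Truncated.Edge.mk' (X := (truncation 2).obj E) e)))
  · have t := Truncated.Edge.CompStruct.ofHomotopyCategory₂Fac (h := .id _)
      ((congrArg (· ≫ _) hf).trans (IsIso.inv_hom_id _))
    exact ⟨t.simplex, t.d₀, t.d₁⟩
  · have t := Truncated.Edge.CompStruct.ofHomotopyCategory₂Fac (h := .id _)
      ((congrArg (_ ≫ ·) hf).trans (IsIso.hom_inv_id _))
    exact ⟨t.simplex, t.d₂, t.d₁⟩

end SSet

/-- A quasicategory `E` is a Kan complex if and only if its homotopy category (its
image under the homotopy category functor `ho`, the left adjoint of the nerve) is a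
groupoid, i.e. every morphism in the homotopy category of `E` is an isomorphism. -/
theorem quasicategory_kan_iff_homotopy_category_groupoid
    (ho : SSet ⥤ Cat) (adj : ho ⊣ nerveFunctor)
    (E : SSet) [SSet.Quasicategory E] :
    SSet.KanComplex E ↔ ∀ (x y : ho.obj E) (f : x ⟶ y), IsIso f := by
  exact ⟨fun _ _ _ f ↦ SSet.isIso_of_kanComplex adj f, fun h ↦ SSet.kanComplex_of_isIso adj E h⟩
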